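/- Let N = (P,T,F,Var) be a UDPN and i, f ℚ-markings. If there exists a ℚ-run σ such that i →σ_ℚ f and |dval(σ)| > |dval(i) ∪ dval(f)| + 1 + maxvars(N), then there exists a ℚ-run ρ such that i →ρ_ℚ f and |dval(ρ)| ≤ |dval(σ)| − 1. -/

import Mathlib

open Finset

noncomputable section
open scoped Classical

/-- An unordered data Petri net over places `P`, transitions `T`, variables `V`,
with countably infinite data domain `D = ℕ`.
`pre p t` is the function `F(p,t) : V → ℕ` and `post t p` is `F(t,p) : V → ℕ`. -/
structure UDPN (P T V : Type) where
  pre : P → T → V → ℕ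
  post : T → P → V → ℕ

/-- An X-step `(c, t, π)`: coefficient, transition and mode. -/
structure Step (T V : Type) where
  c : ℚ
  t : T
  π : V → ℕ

variable {P T V : Type} [Fintype P] [Fintype T] [Fintype V]

/-- The `P × V` rational matrix `F(•,t)`. -/
def preMat (N : UDPN P T V) (t : T) (p : P) (x : V) : ℚ := (N.pre p t x : ℚ)

/-- The displacement `Δ(t) = F(t,•) − F(•,t)` as a `P × V` rational matrix. -/
def delta (N : UDPN P T V) (t : T) (p : P) (x : V) : ℚ :=
  (N.post t p x : ℚ) - (N.pre p t x : ℚ)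

/-- `A ∘ π⁻¹`: the `P × ℕ` matrix with `(A∘π⁻¹)(p,α) = A(p,x)` if `α = π x`,
and `0` if `α` is outside the range of `π`. (For injective `π` the sum has at
most one nonzero summand.) -/
def compInv (A : P → V → ℚ) (π : V → ℕ) (p : P) (α : ℕ) : ℚ :=
  ∑ x : V, if π x = α then A p x else 0

/-- Only finitely many nonzero columns. -/
def FinCols (m : P → ℕ → ℚ) : Prop := {α : ℕ | ∃ p, m p α ≠ 0}.Finite

/-- `IsMarking pos m`: `m` is an X-marking; `pos = true` corresponds to `X = ℚ⁺`
(all entries nonnegative), `pos = false` to `X = ℚ`. -/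
def IsMarking (pos : Bool) (m : P → ℕ → ℚ) : Prop :=
  FinCols m ∧ (pos = true → ∀ p α, 0 ≤ m p α)

/-- Data values of a marking. -/
def dvalM (m : P → ℕ → ℚ) : Set ℕ := {α | ∃ p, m p α ≠ 0}

/-- A valid X-step: nonnegative coefficient and injective mode.  -/
def IsStep (s : Step T V) : Prop := 0 ≤ s.c ∧ Function.Injective s.π

/-- A valid X-run: a finite sequence of X-steps. -/
def IsRun (ρ : List (Step T V)) : Prop := ∀ s ∈ ρ, IsStep s

/-- The effect `c · (Δ(t) ∘ π⁻¹)` of a step. -/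
def stepEffect (N : UDPN P T V) (s : Step T V) (p : P) (α : ℕ) : ℚ :=
  s.c * compInv (delta N s.t) s.π p α

/-- The effect `Δ(ρ)` of a run. -/
def runEffect (N : UDPN P T V) (ρ : List (Step T V)) (p : P) (α : ℕ) : ℚ :=
  (ρ.map fun s => stepEffect N s p α).sum

/-- A step `(c,t,π)` is fireable at `m` if `m − c·(F(•,t)∘π⁻¹)` is again an
X-marking: finitely many nonzero columns and (when `pos`) nonnegative entries. -/
def stepFireable (pos : Bool) (N : UDPN P T V) (m : P → ℕ → ℚ) (s : Step T V) : Prop :=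
  FinCols (fun p α => m p α - s.c * compInv (preMat N s.t) s.π p α) ∧
  (pos = true → ∀ p α, 0 ≤ m p α - s.c * compInv (preMat N s.t) s.π p α)

/-- A run is fireable at `m` if each step is fireable at the corresponding
intermediate marking. -/
def runFireable (pos : Bool) (N : UDPN P T V) : (P → ℕ → ℚ) → List (Step T V) → Prop
  | _, [] => True
  | m, s :: ρ => stepFireable pos N m s ∧
      runFireable pos N (fun p α => m p α + stepEffect N s p α) ρ

/-- `m →ρ_X m'` : `ρ` is fireable at `m` and `m' = m + Δ(ρ)`. -/
def Reaches (pos : Bool) (N : UDPN P T V) (i : P → ℕ → ℚ) (ρ : List (Step T V))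
    (f : P → ℕ → ℚ) : Prop :=
  runFireable pos N i ρ ∧ f = fun p α => i p α + runEffect N ρ p α

/-- `f` is X-reachable from `i`. -/
def Reach (pos : Bool) (N : UDPN P T V) (i f : P → ℕ → ℚ) : Prop :=
  ∃ ρ, IsRun ρ ∧ Reaches pos N i ρ f

/-- `vars(t)`. -/
def varsOf (N : UDPN P T V) (t : T) : Set V :=
  {x | ∃ p, N.pre p t x ≠ 0 ∨ N.post t p x ≠ 0}

/-- `maxvars(N) = max_{t ∈ T} |vars(t)|` (0 if `T` is empty). -/
def maxvars (N : UDPN P T V) : ℕ :=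
  Finset.univ.sup fun t : T => (varsOf N t).ncard

/-- `dval(ρ)`: the data values used by a run. -/
def runDval (N : UDPN P T V) (ρ : List (Step T V)) : Set ℕ :=
  {α | ∃ s ∈ ρ, ∃ x ∈ varsOf N s.t, s.π x = α}
/-- For `α ∈ E`: the least element of `{β ∈ E | β > α}` if nonempty, else `min E`. -/
def nextE (E : Finset ℕ) (α : ℕ) : ℕ :=
  if h : (E.filter fun β => α < β).Nonempty then (E.filter fun β => α < β).min' h
  else if h' : E.Nonempty then E.min' h' else 0

/-- The inverse of `nextE` on `E`: the greatest element of `{γ ∈ E | γ < β}` if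
nonempty, else `max E`. -/
def prevE (E : Finset ℕ) (β : ℕ) : ℕ :=
  if h : (E.filter fun γ => γ < β).Nonempty then (E.filter fun γ => γ < β).max' h
  else if h' : E.Nonempty then E.max' h' else 0

/-- The mode `π'` of `rot(E,ω)`, characterized by: the permutation matrix `P'` of
`π'` satisfies `P'(•,α) = P(•,α)` for `α ∉ E` and `P'(•,α) = P(•, nextE α)` for
`α ∈ E` (i.e. `π' x = α ↔ π x = nextE α` for `α ∈ E`). -/
def rotMode {V : Type} (E : Finset ℕ) (π : V → ℕ) (x : V) : ℕ :=
  if π x ∈ E then prevE E (π x) else π x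

/-- `rot(E,ω)`. -/
def rotStep (E : Finset ℕ) (s : Step T V) : Step T V := ⟨s.c, s.t, rotMode E s.π⟩

/-- The uniformization `U(E,ω)`: the concatenation
`rot^0(E, ω/|E|) ⋯ rot^{|E|−1}(E, ω/|E|)`. -/
def uniformize (E : Finset ℕ) (s : Step T V) : List (Step T V) :=
  (List.range E.card).map fun k => (rotStep E)^[k] ⟨s.c / (E.card : ℚ), s.t, s.π⟩

/-- Column `α` of `Δ(t)·P_π` is zero. -/
def zeroCol (N : UDPN P T V) (s : Step T V) (α : ℕ) : Prop :=
  ∀ p, compInv (delta N s.t) s.π p α = 0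

/-- The transposition of the data values `α` and `β`. -/
def swapVal (α β γ : ℕ) : ℕ := if γ = α then β else if γ = β then α else γ

/-- `R(α,E,ω)`: if column `α` of `Δ(t)·P_π` is zero then `ω` itself; otherwise the
step whose permutation matrix is obtained from `P_π` by exchanging columns `α` and
`β`, where `β` is the least datum in `E` whose column of `Δ(t)·P_π` is zero. -/
def replaceStep (N : UDPN P T V) (α : ℕ) (E : Finset ℕ) (s : Step T V) : Step T V :=
  if zeroCol N s α then s
  else if h : (E.filter fun β => zeroCol N s β).Nonempty then
    ⟨s.c, s.t, fun x => swapVal α ((E.filter fun β => zeroCol N s β).min' h) (s.π x)⟩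
  else s

/-- `dec(E,α,σ)`: the concatenation `U(E,R(α,E,σ(1))) ⋯ U(E,R(α,E,σ(n)))`. -/
def decRun (N : UDPN P T V) (α : ℕ) (E : Finset ℕ) (σ : List (Step T V)) :
    List (Step T V) :=
  σ.flatMap fun s => uniformize E (replaceStep N α E s)

/-- A histogram of order `q`: a `V × ℕ` matrix with nonnegative rational entries
and finitely many nonzero columns, every row summing to `q` and every column
summing to at most `q`. -/
def IsHistogram (H : V → ℕ → ℚ) (q : ℚ) : Prop :=
  0 ≤ q ∧ (∀ x α, 0 ≤ H x α) ∧ ({α | ∃ x, H x α ≠ 0}).Finite ∧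
  (∀ x, ∑ᶠ α, H x α = q) ∧ (∀ α, ∑ x : V, H x α ≤ q)

/-- `col(H)`: the nonzero columns of `H`. -/
def colH (H : V → ℕ → ℚ) : Set ℕ := {α | ∃ x, H x α ≠ 0}

/-- The permutation matrix `P_π` of a mode `π`. -/
def permMat {V : Type} (π : V → ℕ) (x : V) (α : ℕ) : ℚ := if π x = α then 1 else 0

/-- `Pre(ρ)`: pairs `(p,α)` of tokens consumed by the run `ρ`. -/
def preSet (N : UDPN P T V) (ρ : List (Step T V)) : Set (P × ℕ) :=
  {pa | ∃ s ∈ ρ, ∃ x, 0 < N.pre pa.1 s.t x ∧ s.π x = pa.2}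

/-- `Post(ρ)`: pairs `(p,α)` of tokens produced by the run `ρ`. -/
def postSet (N : UDPN P T V) (ρ : List (Step T V)) : Set (P × ℕ) :=
  {pa | ∃ s ∈ ρ, ∃ x, 0 < N.post s.t pa.1 x ∧ s.π x = pa.2}

/-- A loop-less UDPN: `PrePlace(t) ∩ PostPlace(t) = ∅` for every transition. -/
def IsLoopless (N : UDPN P T V) : Prop :=
  ∀ t : T, ¬ ∃ p : P, (∃ x, 0 < N.pre p t x) ∧ (∃ x, 0 < N.post t p x)

set_option linter.unusedSectionVars false

/-- The step obtained by renaming data values along `e` and scaling the coefficient by `c`. -/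
def Step.relabel (c : ℚ) (e : Equiv.Perm ℕ) (s : Step T V) : Step T V :=
  ⟨c * s.c, s.t, fun x => e (s.π x)⟩

theorem IsStep.relabel {s : Step T V} (hs : IsStep s) {c : ℚ} (hc : 0 ≤ c)
    (e : Equiv.Perm ℕ) : IsStep (s.relabel c e) :=
  ⟨mul_nonneg hc hs.1, e.injective.comp hs.2⟩

theorem stepEffect_relabel (N : UDPN P T V) (c : ℚ) (e : Equiv.Perm ℕ) (s : Step T V)
    (p : P) (a : ℕ) :
    stepEffect N (s.relabel c e) p a = c * stepEffect N s p (e.symm a) := by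
  simp only [stepEffect, compInv, Step.relabel, mul_assoc, Equiv.eq_symm_apply]
  congr!

theorem delta_eq_zero_of_notMem_varsOf {N : UDPN P T V} {t : T} {x : V}
    (hx : x ∉ varsOf N t) (p : P) : delta N t p x = 0 := by
  simp only [varsOf, Set.mem_ofPred_eq, not_exists, not_or, not_not] at hx
  simp [delta, hx p]

theorem stepEffect_eq_zero {N : UDPN P T V} {s : Step T V} {a : ℕ}
    (h : ∀ x ∈ varsOf N s.t, s.π x ≠ a) (p : P) : stepEffect N s p a = 0 := by
  rw [stepEffect, compInv, Finset.sum_eq_zero, mul_zero]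
  intro x _
  split_ifs with hx
  · exact delta_eq_zero_of_notMem_varsOf (fun hv => h x hv hx) p
  · rfl

theorem finCols_add_mul_compInv {m : P → ℕ → ℚ} (hm : FinCols m) (c : ℚ) (A : P → V → ℚ)
    (π : V → ℕ) : FinCols fun p a => m p a + c * compInv A π p a := by
  refine (hm.union (Set.finite_range π)).subset ?_
  rintro a ⟨p, hp⟩
  by_contra hn
  simp only [Set.mem_union, Set.mem_ofPred_eq, Set.mem_range, not_or, not_exists, not_not] at hn
  refine hp ?_
  simp [compInv, hn.1 p, hn.2]

/-- Over `ℚ` every run is fireable at every marking. -/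
theorem runFireable_false (N : UDPN P T V) (ρ : List (Step T V)) {m : P → ℕ → ℚ}
    (hm : FinCols m) : runFireable false N m ρ := by
  induction ρ generalizing m with
  | nil => trivial
  | cons s ρ ih =>
    refine ⟨⟨?_, nofun⟩, ih (finCols_add_mul_compInv hm _ _ _)⟩
    simpa [sub_eq_add_neg] using finCols_add_mul_compInv hm (-s.c) (preMat N s.t) s.π

theorem runDval_finite (N : UDPN P T V) (ρ : List (Step T V)) : (runDval N ρ).Finite := by
  refine ((List.finite_toSet ρ).biUnion fun s _ => Set.finite_range s.π).subset ?_
  rintro a ⟨s, hs, x, _, rfl⟩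
  exact Set.mem_biUnion hs ⟨x, rfl⟩

theorem runEffect_relabel (N : UDPN P T V) (c : ℚ) (e : Equiv.Perm ℕ) (ρ : List (Step T V))
    (p : P) (a : ℕ) :
    runEffect N (ρ.map (Step.relabel c e)) p a = c * runEffect N ρ p (e.symm a) := by
  simp only [runEffect, List.map_map, Function.comp_def, stepEffect_relabel,
    List.sum_map_mul_left]

theorem runEffect_flatMap {ι : Type} (N : UDPN P T V) (l : List ι)
    (r : ι → List (Step T V)) (p : P) (a : ℕ) :
    runEffect N (l.flatMap r) p a = (l.map fun k => runEffect N (r k) p a).sum := by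
  induction l with
  | nil => simp [runEffect]
  | cons k l ih => simp [runEffect] at ih ⊢; rw [ih]

theorem ofSubtype_symm_apply_of_notMem {E : Finset ℕ} (g : Equiv.Perm {a // a ∈ E}) {a : ℕ}
    (ha : a ∉ E) : (Equiv.Perm.ofSubtype g).symm a = a := by
  rw [Equiv.symm_apply_eq, Equiv.Perm.ofSubtype_apply_of_not_mem g ha]

/-- A permutation fixing everything outside `E` preserves sums over `E`. -/
theorem sum_comp_symm_of_fixes {E : Finset ℕ} {e : Equiv.Perm ℕ} (he : ∀ a ∉ E, e a = a)
    (F : ℕ → ℚ) : ∑ a ∈ E, F (e.symm a) = ∑ a ∈ E, F a := by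
  have hmem : ∀ a, e a ∈ E ↔ a ∈ E := fun a => by
    by_cases ha : a ∈ E
    · refine iff_of_true ?_ ha
      by_contra hn
      exact hn ((e.injective (he _ hn)).symm ▸ ha)
    · rw [he a ha]
  refine Finset.sum_equiv e.symm (fun a => ?_) fun _ _ => rfl
  rw [← hmem (e.symm a), e.apply_symm_apply]

/-- Summing over all permutations of `E` kills a function whose sum over `E` vanishes. -/
theorem sum_perm_eq_zero {E : Finset ℕ} {F : ℕ → ℚ} (hF : ∑ a ∈ E, F a = 0) {a : ℕ}
    (ha : a ∈ E) :
    ∑ g : Equiv.Perm {a // a ∈ E}, F ((Equiv.Perm.ofSubtype g).symm a) = 0 := by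
  set G : ℕ → ℚ := fun b => ∑ g : Equiv.Perm {a // a ∈ E}, F ((Equiv.Perm.ofSubtype g).symm b)
    with hG
  have hconst : ∀ b ∈ E, G b = G a := by
    intro b hb
    refine Fintype.sum_equiv (Equiv.mulLeft (Equiv.swap ⟨a, ha⟩ ⟨b, hb⟩)) _ _ fun g => ?_
    congr 1
    rw [Equiv.symm_apply_eq, Equiv.coe_mulLeft, map_mul, Equiv.Perm.ofSubtype_swap_eq]
    rw [← Equiv.Perm.inv_def, mul_inv_rev, Equiv.Perm.mul_apply, Equiv.swap_inv,
      Equiv.swap_apply_left, Equiv.Perm.inv_def, Equiv.apply_symm_apply]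
  have hsum : ∑ b ∈ E, G b = 0 := by
    rw [hG, Finset.sum_comm]
    refine Finset.sum_eq_zero fun g _ => ?_
    rw [sum_comp_symm_of_fixes (fun b => Equiv.Perm.ofSubtype_apply_of_not_mem g), hF]
  rw [Finset.sum_congr rfl hconst, Finset.sum_const, nsmul_eq_mul] at hsum
  exact (mul_eq_zero.mp hsum).resolve_left (by exact_mod_cast (Finset.card_pos.mpr ⟨a, ha⟩).ne')

/-- The uniformization of a run: fire its renamings along all permutations of `E`,
with equal weights. -/
def symmetrize (E : Finset ℕ) (τ : List (Step T V)) : List (Step T V) :=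
  (Finset.univ : Finset (Equiv.Perm {a // a ∈ E})).toList.flatMap fun g =>
    τ.map (Step.relabel (Fintype.card (Equiv.Perm {a // a ∈ E}) : ℚ)⁻¹ (Equiv.Perm.ofSubtype g))

theorem runEffect_symmetrize (N : UDPN P T V) (E : Finset ℕ) (τ : List (Step T V))
    (p : P) (a : ℕ) :
    runEffect N (symmetrize E τ) p a =
      (Fintype.card (Equiv.Perm {a // a ∈ E}) : ℚ)⁻¹ *
        ∑ g : Equiv.Perm {a // a ∈ E}, runEffect N τ p ((Equiv.Perm.ofSubtype g).symm a) := by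
  simp only [symmetrize, runEffect_flatMap, runEffect_relabel, Finset.sum_map_toList,
    Finset.mul_sum]

theorem runEffect_symmetrize_of_notMem (N : UDPN P T V) {E : Finset ℕ} (τ : List (Step T V))
    (p : P) {a : ℕ} (ha : a ∉ E) :
    runEffect N (symmetrize E τ) p a = runEffect N τ p a := by
  simp only [runEffect_symmetrize, ofSubtype_symm_apply_of_notMem _ ha, Finset.sum_const,
    nsmul_eq_mul, Finset.card_univ]
  exact inv_mul_cancel_left₀ (by exact_mod_cast Fintype.card_ne_zero) _

theorem runEffect_symmetrize_of_mem (N : UDPN P T V) {E : Finset ℕ} {τ : List (Step T V)}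
    {p : P} (h : ∑ a ∈ E, runEffect N τ p a = 0) {a : ℕ} (ha : a ∈ E) :
    runEffect N (symmetrize E τ) p a = 0 := by
  rw [runEffect_symmetrize, sum_perm_eq_zero h ha, mul_zero]

theorem runDval_symmetrize_subset (N : UDPN P T V) {E : Finset ℕ} {τ : List (Step T V)}
    {S : Set ℕ} (hES : ↑E ⊆ S) (hτ : runDval N τ ⊆ S) : runDval N (symmetrize E τ) ⊆ S := by
  rintro _ ⟨s, hs, x, hx, rfl⟩
  simp only [symmetrize, List.mem_flatMap, List.mem_map] at hs
  obtain ⟨g, -, s, hs, rfl⟩ := hs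
  change Equiv.Perm.ofSubtype g (s.π x) ∈ S
  by_cases hE : s.π x ∈ E
  · rw [Equiv.Perm.ofSubtype_apply_of_mem g hE]
    exact hES (g _).2
  · rw [Equiv.Perm.ofSubtype_apply_of_not_mem g hE]
    exact hτ ⟨s, hs, x, hx, rfl⟩

theorem IsRun.symmetrize {τ : List (Step T V)} (hτ : IsRun τ) (E : Finset ℕ) :
    IsRun (symmetrize E τ) := by
  intro s hs
  simp only [_root_.symmetrize, List.mem_flatMap, List.mem_map] at hs
  obtain ⟨g, -, s, hs, rfl⟩ := hs
  exact (hτ s hs).relabel (by positivity) _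

/-- If `E` is larger than `maxvars N`, then a step can be renamed within `E ∪ {α}` so as to
avoid the data value `α`. -/
theorem exists_perm_avoiding (N : UDPN P T V) {E : Finset ℕ} (hE : maxvars N < E.card) (α : ℕ)
    (s : Step T V) :
    ∃ e : Equiv.Perm ℕ, (∀ a ∉ insert α E, e a = a) ∧
      ∀ x ∈ varsOf N s.t, e (s.π x) ≠ α ∧ (e (s.π x) = s.π x ∨ e (s.π x) ∈ E) := by
  have hcard : (s.π '' varsOf N s.t).ncard < (E : Set ℕ).ncard := by
    rw [Set.ncard_coe_finset]
    refine (Set.ncard_image_le (Set.toFinite _)).trans_lt (lt_of_le_of_lt ?_ hE)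
    exact Finset.le_sup (f := fun t => (varsOf N t).ncard) (Finset.mem_univ s.t)
  obtain ⟨β, hβE, hβ⟩ := Set.exists_mem_notMem_of_ncard_lt_ncard hcard (Set.toFinite _)
  refine ⟨Equiv.swap α β, fun a ha => ?_, fun x hx => ?_⟩
  · rw [Finset.mem_insert, not_or] at ha
    exact Equiv.swap_apply_of_ne_of_ne ha.1 fun h => ha.2 (h ▸ hβE)
  · have hne : s.π x ≠ β := fun h => hβ ⟨x, hx, h⟩
    refine ⟨fun h => hne ?_, ?_⟩
    · exact (Equiv.swap α β).injective (h.trans (Equiv.swap_apply_right α β).symm)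
    · by_cases hα : s.π x = α
      · right
        rw [hα, Equiv.swap_apply_left]
        exact hβE
      · exact Or.inl (Equiv.swap_apply_of_ne_of_ne hα hne)

/-- A run can be renamed stepwise within `E ∪ {α}` so as to avoid the data value `α`. -/
theorem exists_run_avoiding (N : UDPN P T V) {E : Finset ℕ} (hE : maxvars N < E.card) {α : ℕ}
    (hα : α ∉ E) {σ : List (Step T V)} (hσ : IsRun σ) :
    ∃ τ : List (Step T V), IsRun τ ∧ runDval N τ ⊆ (runDval N σ ∪ E) \ {α} ∧
      (∀ p, ∀ a ∉ insert α E, runEffect N τ p a = runEffect N σ p a) ∧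
      (∀ p, runEffect N τ p α = 0) ∧
      ∀ p, ∑ a ∈ E, runEffect N τ p a = ∑ a ∈ insert α E, runEffect N σ p a := by
  choose e hfix havoid using exists_perm_avoiding N hE α
  have hzero : ∀ p, runEffect N (σ.map fun s => s.relabel 1 (e s)) p α = 0 := by
    intro p
    refine List.sum_eq_zero fun q hq => ?_
    simp only [List.mem_map] at hq
    obtain ⟨_, ⟨s, _, rfl⟩, rfl⟩ := hq
    exact stepEffect_eq_zero (s := s.relabel 1 (e s)) (fun x hx => (havoid s x hx).1) p
  refine ⟨σ.map fun s => s.relabel 1 (e s), ?_, ?_, ?_, hzero, ?_⟩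
  · intro s hs
    simp only [List.mem_map] at hs
    obtain ⟨s, hs, rfl⟩ := hs
    exact (hσ s hs).relabel zero_le_one _
  · rintro _ ⟨s, hs, x, hx, rfl⟩
    simp only [List.mem_map] at hs
    obtain ⟨s, hs, rfl⟩ := hs
    obtain ⟨hne, h | h⟩ := havoid s x hx
    · exact ⟨Or.inl ⟨s, hs, x, hx, h.symm⟩, hne⟩
    · exact ⟨Or.inr h, hne⟩
  · intro p a ha
    have hsymm : ∀ s, (e s).symm a = a := fun s => by rw [Equiv.symm_apply_eq, hfix s a ha]
    simp only [runEffect, List.map_map, Function.comp_def, stepEffect_relabel, one_mul, hsymm]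
  · intro p
    rw [← zero_add (∑ a ∈ E, _), ← hzero p, ← Finset.sum_insert hα]
    clear hzero hσ
    induction σ with
    | nil => simp [runEffect]
    | cons s σ ih =>
      simp only [runEffect, List.map_cons, List.sum_cons, Finset.sum_add_distrib] at ih ⊢
      rw [ih]
      simp only [stepEffect_relabel, one_mul]
      rw [sum_comp_symm_of_fixes (hfix s) fun a => stepEffect N s p a]

/-- If there is a ℚ-run `σ` with `i →σ_ℚ f` using more than
`|dval(i) ∪ dval(f)| + 1 + maxvars(N)` data values, then there is a ℚ-run `ρ`
with `i →ρ_ℚ f` and `|dval(ρ)| ≤ |dval(σ)| − 1`. -/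
theorem q_reach_decrease
    (N : UDPN P T V) (i f : P → ℕ → ℚ)
    (hi : IsMarking false i) (hf : IsMarking false f)
    (σ : List (Step T V)) (hσ : IsRun σ) (hσr : Reaches false N i σ f)
    (hbig : (dvalM i ∪ dvalM f).ncard + 1 + maxvars N < (runDval N σ).ncard) :
    ∃ ρ : List (Step T V), IsRun ρ ∧ Reaches false N i ρ f ∧
      (runDval N ρ).ncard ≤ (runDval N σ).ncard - 1 := by
  have hA : (dvalM i ∪ dvalM f).Finite := hi.1.union hf.1
  have hS : (runDval N σ).Finite := runDval_finite N σ
  have hcol : ∀ p, ∀ a ∉ dvalM i ∪ dvalM f, runEffect N σ p a = 0 := by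
    intro p a ha
    simp only [dvalM, Set.mem_union, Set.mem_ofPred_eq, not_or, not_exists, not_not] at ha
    simpa [ha.1 p, ha.2 p] using (congrFun₂ hσr.2 p a).symm
  obtain ⟨α, hαS, hαA⟩ := Set.exists_mem_notMem_of_ncard_lt_ncard
    (s := dvalM i ∪ dvalM f) (t := runDval N σ) (by lia) hA
  set E : Finset ℕ := (hS.toFinset \ hA.toFinset).erase α with hEdef
  have hmemE : ∀ a, a ∈ E ↔ a ≠ α ∧ a ∈ runDval N σ ∧ a ∉ dvalM i ∪ dvalM f := fun a => by
    simp [hEdef]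
  have hE : maxvars N < E.card := by
    have h := Finset.le_card_sdiff hA.toFinset hS.toFinset
    rw [← Set.ncard_eq_toFinset_card _ hA, ← Set.ncard_eq_toFinset_card _ hS] at h
    rw [hEdef, Finset.card_erase_of_mem (by simpa [not_or] using And.intro hαS hαA)]
    lia
  have hαE : α ∉ E := Finset.notMem_erase α _
  obtain ⟨τ, hτ, hdval, hout, hα, hsum⟩ := exists_run_avoiding N hE hαE hσ
  have hinsert : ∀ a ∈ insert α E, a ∉ dvalM i ∪ dvalM f := fun a ha => by
    rcases Finset.mem_insert.mp ha with rfl | ha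
    exacts [hαA, ((hmemE a).mp ha).2.2]
  have hsub : runDval N (symmetrize E τ) ⊆ runDval N σ \ {α} := by
    refine runDval_symmetrize_subset N (fun a ha => ?_) (hdval.trans ?_)
    · exact ⟨((hmemE a).mp ha).2.1, ((hmemE a).mp ha).1⟩
    · exact Set.sdiff_subset_sdiff_left
        (Set.union_subset subset_rfl fun a ha => ((hmemE a).mp ha).2.1)
  refine ⟨symmetrize E τ, hτ.symmetrize E, ⟨runFireable_false N _ hi.1, ?_⟩, ?_⟩
  · rw [hσr.2]
    funext p a
    congr 1
    by_cases haE : a ∈ E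
    · rw [hcol p a (hinsert a (Finset.mem_insert_of_mem haE)),
        runEffect_symmetrize_of_mem N _ haE]
      rw [hsum, Finset.sum_eq_zero fun b hb => hcol p b (hinsert b hb)]
    · rw [runEffect_symmetrize_of_notMem N τ p haE]
      by_cases haα : a = α
      · rw [haα, hα, hcol p α hαA]
      · exact (hout p a (by simp [haE, haα])).symm
  · rw [← Set.ncard_sdiff_singleton_of_mem hαS]
    exact Set.ncard_le_ncard hsub hS.sdiff
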